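/- Every finitely generated centrally nilpotent brace is supersoluble. -/

import Mathlib

/-- A (skew left) brace: a set with an additive group structure (not necessarily abelian)
and a multiplicative group structure sharing the same identity, satisfying the skew
distributive law `a * (b + c) = a * b + -a + a * c`. -/
class SkewBrace (B : Type*) extends AddGroup B, Group B where
  one_eq_zero : (1 : B) = (0 : B)
  skew_distrib : ∀ a b c : B, a * (b + c) = a * b + -a + a * c

/-- A group is supersoluble if it has a finite chain of normal subgroups with all
factors cyclic. -/
def Group.IsSupersoluble (G : Type*) [Group G] : Prop :=
  ∃ (n : ℕ) (H : ℕ → Subgroup G),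
    H 0 = ⊥ ∧ H n = ⊤ ∧ (∀ i, (H i).Normal) ∧ (∀ i, i < n → H i ≤ H (i + 1)) ∧
    ∀ i, i < n → ∃ x ∈ H (i + 1), ∀ y ∈ H (i + 1), ∃ k : ℤ, (x ^ k)⁻¹ * y ∈ H i

namespace SkewBrace

variable {B : Type*} [SkewBrace B]

/-- `lam a b = -a + a * b`, i.e. `λ_a(b)`. -/
def lam (a b : B) : B := -a + a * b

/-- the star operation `a ∗ b = λ_a(b) - b`. -/
def starOp (a b : B) : B := lam a b + -b

/-- the additive commutator `[a,b]_+`. -/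
def addCommutator (a b : B) : B := -a + -b + a + b

/-- A subbrace of `B`: a subset that is a subgroup of both `(B,+)` and `(B,·)`. -/
structure Subbrace (B : Type*) [SkewBrace B] where
  carrier : Set B
  zero_mem : (0 : B) ∈ carrier
  add_mem : ∀ {a b : B}, a ∈ carrier → b ∈ carrier → a + b ∈ carrier
  neg_mem : ∀ {a : B}, a ∈ carrier → -a ∈ carrier
  mul_mem : ∀ {a b : B}, a ∈ carrier → b ∈ carrier → a * b ∈ carrier
  inv_mem : ∀ {a : B}, a ∈ carrier → a⁻¹ ∈ carrier

/-- An ideal of `B`: a subbrace that is normal in `(B,+)` and in `(B,·)` and is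
invariant under all the maps `λ_b`. -/
structure BraceIdeal (B : Type*) [SkewBrace B] extends Subbrace B where
  addConj_mem : ∀ (b : B) {a : B}, a ∈ carrier → b + a + -b ∈ carrier
  mulConj_mem : ∀ (b : B) {a : B}, a ∈ carrier → b * a * b⁻¹ ∈ carrier
  lam_mem : ∀ (b : B) {a : B}, a ∈ carrier → lam b a ∈ carrier

/-- The additive subgroup underlying a subbrace. -/
def Subbrace.addSubgroup (S : Subbrace B) : AddSubgroup B where
  carrier := S.carrier
  zero_mem' := S.zero_mem
  add_mem' := S.add_mem
  neg_mem' := S.neg_mem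

/-- The multiplicative subgroup underlying a subbrace. -/
def Subbrace.subgroup (S : Subbrace B) : Subgroup B where
  carrier := S.carrier
  one_mem' := by rw [one_eq_zero]; exact S.zero_mem
  mul_mem' := S.mul_mem
  inv_mem' := S.inv_mem

/-- Given ideals `J ≤ I` of `B`, `MemSocQuotRel I J x` says that the coset of `x`
lies in `Soc(I/J) = Ker(λ) ∩ Z(I/J, +)` (for `I = B` take `I = Set.univ`). -/
def MemSocQuotRel (I J : Set B) (x : B) : Prop :=
  x ∈ I ∧ (∀ y ∈ I, -y + lam x y ∈ J) ∧ ∀ y ∈ I, -(y + x) + (x + y) ∈ J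

/-- Given ideals `J ≤ I` of `B`, `MemZetaQuotRel I J x` says that the coset of `x`
lies in `ζ(I/J) = Soc(I/J) ∩ Z(I/J, ·)`. -/
def MemZetaQuotRel (I J : Set B) (x : B) : Prop :=
  MemSocQuotRel I J x ∧ ∀ y ∈ I, (y * x)⁻¹ * (x * y) ∈ J

/-- The coset of `x` lies in `Soc(B/J)`. -/
def MemSocQuot (J : Set B) (x : B) : Prop := MemSocQuotRel Set.univ J x

/-- The coset of `x` lies in `ζ(B/J)`. -/
def MemZetaQuot (J : Set B) (x : B) : Prop := MemZetaQuotRel Set.univ J x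

/-- For ideals `I ≤ J`, the additive group of the quotient `J/I` is infinite cyclic. -/
def QuotAddInfCyclic (I J : Set B) : Prop :=
  ∃ x ∈ J, (∀ y ∈ J, ∃ n : ℤ, -(n • x) + y ∈ I) ∧ ∀ n : ℤ, n • x ∈ I → n = 0

/-- For ideals `I ≤ J`, the quotient `J/I` has prime order `p`. -/
def QuotPrimeOrder (I J : Set B) (p : ℕ) : Prop :=
  p.Prime ∧ ∃ x ∈ J, x ∉ I ∧ p • x ∈ I ∧ ∀ y ∈ J, ∃ n : ℤ, -(n • x) + y ∈ I

/-- A brace is supersoluble if it has a finite chain of ideals each factor of which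
either is additively infinite cyclic and contained in the socle of the corresponding
quotient, or has prime order. -/
def IsSupersoluble (B : Type*) [SkewBrace B] : Prop :=
  ∃ (n : ℕ) (I : ℕ → BraceIdeal B),
    (I 0).carrier = {0} ∧ (I n).carrier = Set.univ ∧
    (∀ i, i < n → (I i).carrier ⊆ (I (i + 1)).carrier) ∧
    ∀ i, i < n →
      (QuotAddInfCyclic (I i).carrier (I (i + 1)).carrier ∧
        ∀ x ∈ (I (i + 1)).carrier, MemSocQuot (I i).carrier x) ∨
      ∃ p : ℕ, QuotPrimeOrder (I i).carrier (I (i + 1)).carrier p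

/-- The upper socle series of the brace (carrier of the ideal) `I`. -/
def socChainRel (I : Set B) : ℕ → Set B
  | 0 => {0}
  | n + 1 => {x | MemSocQuotRel I (socChainRel I n) x}

/-- The upper central series of the brace (carrier of the ideal) `I`. -/
def zetaChainRel (I : Set B) : ℕ → Set B
  | 0 => {0}
  | n + 1 => {x | MemZetaQuotRel I (zetaChainRel I n) x}

/-- The upper socle series `Soc_n(B)` of `B`. -/
def socChain (B : Type*) [SkewBrace B] : ℕ → Set B := socChainRel Set.univ

/-- The upper central series `ζ_n(B)` of `B`. -/
def zetaChain (B : Type*) [SkewBrace B] : ℕ → Set B := zetaChainRel Set.univ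

/-- A brace is centrally nilpotent if its upper central series reaches `B`. -/
def IsCentrallyNilpotent (B : Type*) [SkewBrace B] : Prop :=
  ∃ m : ℕ, zetaChain B m = Set.univ

end SkewBrace

namespace SkewBrace

/-- A brace is finitely generated if there is a finite subset contained in no proper
subbrace (i.e. generating `B` as a brace). -/
def IsFinitelyGenerated (B : Type*) [SkewBrace B] : Prop :=
  ∃ S : Finset B, ∀ C : Subbrace B, ↑S ⊆ C.carrier → C.carrier = Set.univ

end SkewBrace

open scoped commutatorElement
theorem SSAux.map_normal_of_between {G : Type*} [Group G] (n : ℕ) (L : Subgroup G)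
    (h1 : (⊤ : Subgroup G).lowerCentralSeries (n+1) ≤ L)
    (h2 : L ≤ (⊤ : Subgroup G).lowerCentralSeries n) : L.Normal := by
  refine ⟨fun l hl g => ?_⟩
  have h3 : ⁅l, g⁆ ∈ (⊤ : Subgroup G).lowerCentralSeries (n+1) := by
    rw [Subgroup.lowerCentralSeries_succ]
    exact Subgroup.commutator_mem_commutator (h2 hl) (Subgroup.mem_top g)
  have h4 := L.mul_mem (L.inv_mem (h1 h3)) hl
  have : g * l * g⁻¹ = ⁅l, g⁆⁻¹ * l := by
    rw [commutatorElement_def]; group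
  rwa [this]

theorem SSAux.lcs_fg {G : Type*} [Group G] (S : Set G) (hS : S.Finite)
    (hc : Subgroup.closure S = ⊤) (n : ℕ) :
    ∃ X : Set G, X.Finite ∧ X ⊆ (⊤ : Subgroup G).lowerCentralSeries n ∧
      (⊤ : Subgroup G).lowerCentralSeries n ≤
        Subgroup.closure X ⊔ (⊤ : Subgroup G).lowerCentralSeries (n+1) := by
  induction n with
  | zero => exact ⟨S, hS, by simp, by simp [hc]⟩
  | succ n ih =>
    obtain ⟨X, hXf, hX, hle⟩ := ih
    have hX' : Set.image2 (fun x s => ⁅x, s⁆) X S ⊆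
        (⊤ : Subgroup G).lowerCentralSeries (n+1) := by
      rintro _ ⟨x, hx, s, -, rfl⟩
      rw [Subgroup.lowerCentralSeries_succ]
      exact Subgroup.commutator_mem_commutator (hX hx) (Subgroup.mem_top s)
    refine ⟨Set.image2 (fun x s => ⁅x, s⁆) X S, hXf.image2 _ hS, hX', ?_⟩
    set H := Subgroup.closure (Set.image2 (fun x s => ⁅x, s⁆) X S) ⊔
      (⊤ : Subgroup G).lowerCentralSeries (n+1+1) with hH
    have hHn : H.Normal := SSAux.map_normal_of_between (n+1) H le_sup_right
      (sup_le ((Subgroup.closure_le _).2 hX')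
        (Subgroup.lowerCentralSeries_antitone _ (Nat.le_succ _)))
    have key : ∀ g h : G, ⁅g, h⁆ ∈ H ↔ Commute (QuotientGroup.mk' H g) (QuotientGroup.mk' H h) := by
      intro g h
      rw [← commutatorElement_eq_one_iff_commute, ← map_commutatorElement,
        QuotientGroup.mk'_apply, QuotientGroup.eq_one_iff]
    let M := (Subgroup.center (G ⧸ H)).comap (QuotientGroup.mk' H)
    have hM : ∀ g, g ∈ M ↔ ∀ h, ⁅g, h⁆ ∈ H := by
      intro g
      simp only [M, Subgroup.mem_comap, Subgroup.mem_center_iff, key]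
      constructor
      · intro hh h; exact (hh _).symm
      · intro hh q
        obtain ⟨h, rfl⟩ := QuotientGroup.mk'_surjective H q
        exact (hh h).symm
    have hXM : Subgroup.closure X ≤ M := by
      rw [Subgroup.closure_le]
      intro x hx
      rw [SetLike.mem_coe, hM]
      intro h
      have : Subgroup.closure S ≤
          (Subgroup.centralizer {QuotientGroup.mk' H x}).comap (QuotientGroup.mk' H) := by
        rw [Subgroup.closure_le]
        intro s hs
        rw [SetLike.mem_coe, Subgroup.mem_comap, Subgroup.mem_centralizer_singleton_iff]
        have := (key x s).1 (le_sup_left (a := Subgroup.closure _)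
          (Subgroup.subset_closure ⟨x, hx, s, hs, rfl⟩))
        first | exact this | exact this.symm
      rw [hc] at this
      have h5 := this (Subgroup.mem_top h)
      rw [Subgroup.mem_comap, Subgroup.mem_centralizer_singleton_iff] at h5
      rw [key]
      first | exact h5 | exact h5.symm
    have hGM : (⊤ : Subgroup G).lowerCentralSeries (n+1) ≤ M := by
      intro g hg
      rw [hM]
      intro h
      refine le_sup_right (a := Subgroup.closure _) ?_
      rw [Subgroup.lowerCentralSeries_succ]
      exact Subgroup.commutator_mem_commutator hg (Subgroup.mem_top h)
    have hall := hle.trans (sup_le hXM hGM)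
    rw [Subgroup.lowerCentralSeries_succ, Subgroup.commutator_le]
    intro g hg h _
    exact (hM g).1 (hall hg) h

theorem SSAux.fg_ext {G : Type*} [Group G] (N : Subgroup G) [N.Normal] (x : G)
    (hN : ∀ K ≤ N, K.FG) (K : Subgroup G) (hK : K ≤ N ⊔ Subgroup.zpowers x) : K.FG := by
  have h1 : K.map (QuotientGroup.mk' N) ≤ Subgroup.zpowers (QuotientGroup.mk' N x) := by
    refine (Subgroup.map_mono hK).trans ?_
    rw [Subgroup.map_sup, MonoidHom.map_zpowers]
    simp
  obtain ⟨q, hq⟩ := (Subgroup.isCyclic_iff_exists_zpowers_eq_top (K.map (QuotientGroup.mk' N))).1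
    (Subgroup.isCyclic_of_le h1)
  have hqm : q ∈ K.map (QuotientGroup.mk' N) := hq ▸ Subgroup.mem_zpowers q
  obtain ⟨k, hk, rfl⟩ := hqm
  have : K = (K ⊓ N) ⊔ Subgroup.zpowers k := by
    apply le_antisymm
    · intro y hy
      have : QuotientGroup.mk' N y ∈ Subgroup.zpowers (QuotientGroup.mk' N k) :=
        hq ▸ Subgroup.mem_map_of_mem _ hy
      obtain ⟨j, hj⟩ := this
      have h2 : y * (k^j)⁻¹ ∈ N := by
        rw [← QuotientGroup.eq_one_iff, ← QuotientGroup.mk'_apply, map_mul, map_inv, map_zpow]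
        simp only at hj
        rw [hj]; simp
      have h3 : y = (y * (k^j)⁻¹) * k^j := by group
      rw [h3]
      exact Subgroup.mul_mem_sup ⟨K.mul_mem hy (K.inv_mem (K.zpow_mem hk j)), h2⟩ ⟨j, rfl⟩
    · exact sup_le inf_le_left (by simpa using hk)
  rw [this]
  exact (hN _ inf_le_right).sup ⟨{k}, by simp [Subgroup.zpowers_eq_closure]⟩

theorem SSAux.fg_of_nilpotent {G : Type*} [Group G] [Group.IsNilpotent G] [hG : Group.FG G]
    (K : Subgroup G) : K.FG := by
  obtain ⟨S, hc, hS⟩ := Group.fg_iff.1 hG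
  obtain ⟨c, hcc⟩ := (Subgroup.nilpotent_iff_lowerCentralSeries (G := G)).1 inferInstance
  have step : ∀ n, (∀ K ≤ (⊤ : Subgroup G).lowerCentralSeries (n+1), K.FG) →
      ∀ K ≤ (⊤ : Subgroup G).lowerCentralSeries n, K.FG := by
    intro n hn
    obtain ⟨X, hXf, hX, hle⟩ := SSAux.lcs_fg S hS hc n
    have : ∀ K ≤ (⊤ : Subgroup G).lowerCentralSeries (n+1) ⊔ Subgroup.closure X, K.FG := by
      clear hle
      induction X, hXf using Set.Finite.induction_on with
      | empty => simpa using hn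
      | @insert x X _ _ ih =>
        have hX2 : X ⊆ (⊤ : Subgroup G).lowerCentralSeries n :=
          (Set.subset_insert _ _).trans hX
        have hno : ((⊤ : Subgroup G).lowerCentralSeries (n+1) ⊔ Subgroup.closure X).Normal :=
          SSAux.map_normal_of_between n _ le_sup_left
            (sup_le (Subgroup.lowerCentralSeries_antitone _ (Nat.le_succ _))
              ((Subgroup.closure_le _).2 hX2))
        intro K hK
        refine SSAux.fg_ext _ x (ih hX2) K (hK.trans ?_)
        rw [Set.insert_eq, Subgroup.closure_union, ← Subgroup.zpowers_eq_closure, sup_assoc,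
          sup_comm (Subgroup.zpowers x)]
    intro K hK
    exact this K (hK.trans (hle.trans (sup_comm _ _).le))
  have : ∀ n, n ≤ c → ∀ K ≤ (⊤ : Subgroup G).lowerCentralSeries (c - n), K.FG := by
    intro n
    induction n with
    | zero =>
      intro _ K hK
      simp only [Nat.sub_zero, hcc, le_bot_iff] at hK
      rw [hK]; exact Subgroup.FG.bot
    | succ n ih =>
      intro h K hK
      refine step (c - (n+1)) ?_ K hK
      have : c - (n+1) + 1 = c - n := by omega
      rw [this]
      exact ih (by omega)
  exact this c le_rfl K (by simp)

theorem SSAux.add_fg_of_nilpotent {B : Type*} [AddGroup B]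
    [Group.IsNilpotent (Multiplicative B)] [hG : AddGroup.FG B]
    (K : AddSubgroup B) : K.FG := by
  rw [AddSubgroup.fg_iff_mul_fg]
  have : Group.FG (Multiplicative B) := AddGroup.fg_iff_mul_fg.1 hG
  exact SSAux.fg_of_nilpotent _

namespace SkewBrace

section Basic

variable {B : Type*} [SkewBrace B]

theorem mul_eq_add_lam (a b : B) : a * b = a + lam a b := by simp [lam]

theorem lam_add (a b c : B) : lam a (b + c) = lam a b + lam a c := by
  simp [lam, skew_distrib, add_assoc]

theorem lam_zero (a : B) : lam a 0 = 0 := by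
  have : a * 0 = a := by rw [← one_eq_zero, mul_one]
  simp [lam, this]

theorem lam_neg (a b : B) : lam a (-b) = - lam a b := by
  rw [eq_neg_iff_add_eq_zero, ← lam_add]; simp [lam_zero]

theorem lam_mul (a b c : B) : lam (a * b) c = lam a (lam b c) := by
  have h1 : a * (b * c) = a + (lam a b + lam a (lam b c)) := by
    rw [mul_eq_add_lam b c, mul_eq_add_lam a, lam_add]
  have h2 : a * b = a + lam a b := mul_eq_add_lam a b
  rw [lam, mul_assoc, h1, h2]
  simp [add_assoc]

theorem lam_one' (c : B) : lam 1 c = c := by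
  rw [lam, one_mul, one_eq_zero]; simp

theorem lam_inv_lam (a c : B) : lam a⁻¹ (lam a c) = c := by
  rw [← lam_mul, inv_mul_cancel, lam_one']

theorem lam_lam_inv (a c : B) : lam a (lam a⁻¹ c) = c := by
  rw [← lam_mul, mul_inv_cancel, lam_one']

theorem inv_eq_neg_lam (a : B) : a⁻¹ = - lam a⁻¹ a := by
  rw [eq_neg_iff_add_eq_zero, ← mul_eq_add_lam, inv_mul_cancel, one_eq_zero]

/-- The centre `ζ(B)`, as an additive subgroup. -/
def zc (B : Type*) [SkewBrace B] : AddSubgroup B where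
  carrier := {z | ∀ y, lam z y = y ∧ z + y = y + z ∧ z * y = y * z}
  zero_mem' := by
    intro y
    refine ⟨?_, by simp, ?_⟩
    · rw [← one_eq_zero, lam_one']
    · rw [← one_eq_zero]; simp
  add_mem' := by
    intro a b ha hb y
    have hab : a + b = a * b := by rw [mul_eq_add_lam, (ha b).1]
    refine ⟨?_, ?_, ?_⟩
    · rw [hab, lam_mul, (hb y).1, (ha y).1]
    · rw [add_assoc, (hb y).2.1, ← add_assoc, (ha y).2.1, add_assoc]
    · rw [hab, mul_assoc, (hb y).2.2, ← mul_assoc, (ha y).2.2, mul_assoc]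
  neg_mem' := by
    intro a ha y
    have hab : -a = a⁻¹ := by
      rw [inv_eq_neg_lam a]
      congr 1
      have := lam_inv_lam a a
      rw [(ha a).1] at this
      exact this.symm
    refine ⟨?_, ?_, ?_⟩
    · have := lam_inv_lam a y
      rw [hab]
      rwa [(ha y).1] at this
    · have h : AddCommute a y := (ha y).2.1
      exact h.neg_left
    · rw [hab]
      have h : Commute a y := (ha y).2.2
      exact h.inv_left

theorem mem_zc {z : B} : z ∈ zc B ↔ ∀ y, lam z y = y ∧ z + y = y + z ∧ z * y = y * z := Iff.rfl

theorem zc_mul {z : B} (hz : z ∈ zc B) (y : B) : z * y = z + y := by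
  rw [mul_eq_add_lam, (hz y).1]

theorem mul_zc {z : B} (hz : z ∈ zc B) (y : B) : y * z = y + z := by
  rw [← (hz y).2.2, zc_mul hz, (hz y).2.1]

theorem lam_zc {z : B} (hz : z ∈ zc B) (y : B) : lam y z = z := by
  rw [lam, mul_zc hz]; simp

theorem zc_inv {z : B} (hz : z ∈ zc B) : z⁻¹ = -z := by
  rw [inv_eq_neg_lam, lam_zc hz]

theorem zc_normal : (zc B).Normal := ⟨fun z hz g => by
  rw [← (hz g).2.1]; simpa using hz⟩

theorem memZetaQuot_zero_iff (x : B) : MemZetaQuotRel Set.univ ({0} : Set B) x ↔ x ∈ zc B := by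
  simp only [MemZetaQuotRel, MemSocQuotRel, Set.mem_univ, true_and, forall_const,
    Set.mem_singleton_iff, mem_zc]
  constructor
  · rintro ⟨⟨h1, h2⟩, h3⟩ y
    have h3' := h3 y
    rw [← one_eq_zero, inv_mul_eq_one] at h3'
    exact ⟨(neg_add_eq_zero.1 (h1 y)).symm, (neg_add_eq_zero.1 (h2 y)).symm, h3'.symm⟩
  · intro h
    refine ⟨⟨fun y => ?_, fun y => ?_⟩, fun y => ?_⟩
    · rw [(h y).1]; simp
    · rw [(h y).2.1]; simp
    · rw [(h y).2.2, inv_mul_cancel, one_eq_zero]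

/-- Additive subgroups of the centre are ideals. -/
def zIdeal (A : AddSubgroup B) (hA : A ≤ zc B) : BraceIdeal B where
  carrier := A
  zero_mem := A.zero_mem
  add_mem := A.add_mem
  neg_mem := A.neg_mem
  mul_mem := fun {a b} ha hb => by rw [zc_mul (hA ha)]; exact A.add_mem ha hb
  inv_mem := fun {a} ha => by rw [zc_inv (hA ha)]; exact A.neg_mem ha
  addConj_mem := fun b {a} ha => by rw [← (hA ha b).2.1]; simpa using ha
  mulConj_mem := fun b {a} ha => by rw [← (hA ha b).2.2]; simpa using ha
  lam_mem := fun b {a} ha => by rw [lam_zc (hA ha)]; exact ha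

theorem BraceIdeal.ext' {I J : BraceIdeal B} (h : I.carrier = J.carrier) : I = J := by
  obtain ⟨⟨c, _, _, _, _, _⟩, _, _, _⟩ := I
  obtain ⟨⟨d, _, _, _, _, _⟩, _, _, _⟩ := J
  simp only at h
  subst h
  rfl

/-- One step of a supersoluble chain. -/
def Step (I J : BraceIdeal B) : Prop :=
  I.carrier ⊆ J.carrier ∧
    ((QuotAddInfCyclic I.carrier J.carrier ∧ ∀ x ∈ J.carrier, MemSocQuot I.carrier x) ∨
      ∃ p : ℕ, QuotPrimeOrder I.carrier J.carrier p)

theorem exists_chain {I J : BraceIdeal B} (h : Relation.ReflTransGen Step I J) :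
    ∃ (n : ℕ) (f : ℕ → BraceIdeal B), f 0 = I ∧ f n = J ∧ ∀ i, i < n → Step (f i) (f (i+1)) := by
  induction h with
  | refl => exact ⟨0, fun _ => I, rfl, rfl, by simp⟩
  | @tail K L _ hs ih =>
    obtain ⟨n, f, h0, hn, hf⟩ := ih
    refine ⟨n+1, fun i => if i ≤ n then f i else L, by simpa using h0, by simp, ?_⟩
    intro i hi
    rcases Nat.lt_succ_iff_lt_or_eq.1 hi with h | h
    · simpa [h.le, Nat.succ_le_of_lt h] using hf i h
    · subst h
      simpa [hn] using hs

theorem soc_of_zc (A : AddSubgroup B) {x : B} (hx : x ∈ zc B) : MemSocQuot (A : Set B) x := by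
  refine ⟨trivial, fun y _ => ?_, fun y _ => ?_⟩
  · rw [(hx y).1]; simp
  · rw [(hx y).2.1]; simp

theorem mem_sup_zmultiples {A : AddSubgroup B} (hA : A ≤ zc B) {x y : B} :
    y ∈ A ⊔ AddSubgroup.zmultiples x ↔ ∃ n : ℤ, -(n • x) + y ∈ A := by
  have hn : A.Normal := ⟨fun z hz g => by rw [← (hA hz g).2.1]; simpa using hz⟩
  constructor
  · intro h
    rw [AddSubgroup.mem_sup_of_normal_left] at h
    obtain ⟨a, ha, z, ⟨n, rfl⟩, rfl⟩ := h
    refine ⟨n, ?_⟩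
    simp only
    rw [(hA ha _).2.1]; simpa using ha
  · rintro ⟨n, h⟩
    have := AddSubgroup.add_mem_sup h (AddSubgroup.zsmul_mem_zmultiples x n)
    rw [(hA h _).2.1] at this
    simpa using this

theorem cyc_fin (n : ℕ) : 0 < n → ∀ (A A' : AddSubgroup B) (hA : A ≤ zc B) (hA' : A' ≤ zc B)
    (x : B), A' = A ⊔ AddSubgroup.zmultiples x → n • x ∈ A →
    Relation.ReflTransGen Step (zIdeal A hA) (zIdeal A' hA') := by
  induction n using Nat.strong_induction_on with
  | _ n ih =>
    intro hn A A' hA hA' x hx hnx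
    by_cases h1 : n = 1
    · have : A' = A := by
        rw [hx, sup_eq_left]
        simpa [h1] using hnx
      subst this
      exact .refl
    · obtain ⟨p, hp, k, rfl⟩ := Nat.exists_prime_and_dvd h1
      have hxA' : x ∈ A' := by rw [hx]; exact le_sup_right (a := A) (AddSubgroup.mem_zmultiples x)
      have hle : A ⊔ AddSubgroup.zmultiples (p • x) ≤ A' := by
        rw [hx]
        refine sup_le_sup_left ?_ _
        simpa using AddSubgroup.nsmul_mem _ (AddSubgroup.mem_zmultiples x) p
      have hk : 0 < k := Nat.pos_of_mul_pos_left hn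
      have r1 := ih k (by nlinarith [hp.two_le]) hk A
        (A ⊔ AddSubgroup.zmultiples (p • x)) hA (hle.trans hA') (p • x) rfl
        (by rwa [smul_smul, mul_comm])
      have hpx : p • x ∈ A ⊔ AddSubgroup.zmultiples (p • x) :=
        le_sup_right (a := A) (AddSubgroup.mem_zmultiples _)
      by_cases hxm : x ∈ A ⊔ AddSubgroup.zmultiples (p • x)
      · have : A ⊔ AddSubgroup.zmultiples (p • x) = A' := by
          apply le_antisymm hle
          rw [hx]
          exact sup_le le_sup_left (by simpa using hxm)
        have e : zIdeal A' hA' = zIdeal _ (hle.trans hA') :=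
          BraceIdeal.ext' (congrArg (fun A : AddSubgroup B => (A : Set B)) this.symm)
        rw [e]; exact r1
      · refine r1.tail ⟨hle, Or.inr ⟨p, hp, x, hxA', hxm, hpx, ?_⟩⟩
        intro y hy
        have hy' : y ∈ A' := hy
        rw [hx, mem_sup_zmultiples hA] at hy'
        obtain ⟨n, h⟩ := hy'
        exact ⟨n, le_sup_left (b := AddSubgroup.zmultiples (p • x)) h⟩

theorem cyc_any (A A' : AddSubgroup B) (hA : A ≤ zc B) (hA' : A' ≤ zc B)
    (x : B) (hx : A' = A ⊔ AddSubgroup.zmultiples x) :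
    Relation.ReflTransGen Step (zIdeal A hA) (zIdeal A' hA') := by
  by_cases h : ∃ n : ℕ, 0 < n ∧ n • x ∈ A
  · obtain ⟨n, hn, h⟩ := h
    exact cyc_fin n hn A A' hA hA' x hx h
  · push Not at h
    refine .single ⟨by subst hx; exact le_sup_left (a := A), Or.inl ⟨⟨x, ?_, ?_, ?_⟩, ?_⟩⟩
    · subst hx; exact le_sup_right (a := A) (AddSubgroup.mem_zmultiples x)
    · intro y hy
      have hy' : y ∈ A' := hy
      rwa [hx, mem_sup_zmultiples hA] at hy'
    · intro n hn
      have hn : n • x ∈ A := hn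
      by_contra h0
      refine h n.natAbs (Int.natAbs_pos.2 h0) ?_
      rcases Int.natAbs_eq n with e | e
      · rw [e, natCast_zsmul] at hn; exact hn
      · rw [e, neg_zsmul, natCast_zsmul, neg_mem_iff] at hn; exact hn
    · intro y hy
      exact soc_of_zc A (hA' hy)

theorem chain_zc (X : Set B) (hX : X.Finite) (h : AddSubgroup.closure X ≤ zc B) :
    Relation.ReflTransGen Step (zIdeal ⊥ bot_le) (zIdeal (AddSubgroup.closure X) h) := by
  induction X, hX using Set.Finite.induction_on with
  | empty =>
    have : zIdeal (AddSubgroup.closure ∅) h = zIdeal (⊥ : AddSubgroup B) bot_le :=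
      BraceIdeal.ext'
        (congrArg (fun A : AddSubgroup B => (A : Set B)) AddSubgroup.closure_empty)
    rw [this]
  | @insert x X _ _ ih =>
    have hle : AddSubgroup.closure X ≤ zc B :=
      (AddSubgroup.closure_mono (Set.subset_insert _ _)).trans h
    refine (ih hle).trans (cyc_any _ _ hle h x ?_)
    rw [Set.insert_eq, AddSubgroup.closure_union, ← AddSubgroup.zmultiples_eq_closure, sup_comm]

/-- The key finite generation lemma. -/
theorem add_fg_of_mod_zc (hfg : IsFinitelyGenerated B) (X : Set B) (hX : X.Finite)
    (h1 : ∀ b : B, ∃ a ∈ AddSubgroup.closure X, ∃ z ∈ zc B, b = a + z)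
    (h2 : ∀ b : B, ∃ a ∈ Subgroup.closure X, ∃ z ∈ zc B, b = a + z) : AddGroup.FG B := by
  obtain ⟨S, hS⟩ := hfg
  obtain ⟨Y, hYf, hXY, hSY, hYi⟩ : ∃ Y : Set B, Y.Finite ∧ X ⊆ Y ∧ (S : Set B) ⊆ Y ∧
      ∀ y ∈ Y, y⁻¹ ∈ Y := by
    refine ⟨(X ∪ S) ∪ (fun x => x⁻¹) '' (X ∪ S), ?_, ?_, ?_, ?_⟩
    · exact (hX.union S.finite_toSet).union ((hX.union S.finite_toSet).image _)
    · exact fun x hx => Or.inl (Or.inl hx)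
    · exact fun x hx => Or.inl (Or.inr hx)
    · rintro y (hy | ⟨x, hx, rfl⟩)
      · exact Or.inr ⟨y, hy, rfl⟩
      · left; simpa using hx
  choose a ha z hz hb using h1
  let C := AddSubgroup.closure (Y ∪ Set.image2 (fun x y => z (lam x y)) Y Y)
  have hYC : AddSubgroup.closure X ≤ C :=
    AddSubgroup.closure_mono (hXY.trans Set.subset_union_left)
  have hlam : ∀ x ∈ Y, ∀ c ∈ C, lam x c ∈ C := by
    intro x hx c hc
    induction hc using AddSubgroup.closure_induction with
    | mem y hy =>
      rcases hy with hy | ⟨u, _, v, _, rfl⟩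
      · rw [hb (lam x y)]
        exact C.add_mem (hYC (ha _)) (AddSubgroup.subset_closure (Or.inr ⟨x, hx, y, hy, rfl⟩))
      · rw [lam_zc (hz _)]
        exact AddSubgroup.subset_closure (Or.inr ⟨u, ‹_›, v, ‹_›, rfl⟩)
    | zero => rw [lam_zero]; exact C.zero_mem
    | add u v _ _ hu hv => rw [lam_add]; exact C.add_mem hu hv
    | neg u _ hu => rw [lam_neg]; exact C.neg_mem hu
  have hM : ∀ m ∈ Subgroup.closure X,
      (∀ c ∈ C, lam m c ∈ C) ∧ (∀ c ∈ C, lam m⁻¹ c ∈ C) := by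
    intro m hm
    induction hm using Subgroup.closure_induction with
    | mem y hy => exact ⟨hlam y (hXY hy), hlam _ (hYi y (hXY hy))⟩
    | one => simp [lam_one']
    | mul u v _ _ hu hv =>
      refine ⟨fun c hc => ?_, fun c hc => ?_⟩
      · rw [lam_mul]; exact hu.1 _ (hv.1 _ hc)
      · rw [mul_inv_rev, lam_mul]; exact hv.2 _ (hu.2 _ hc)
    | inv u _ hu => exact ⟨hu.2, by simpa using hu.1⟩
  have hall : ∀ b : B, (∀ c ∈ C, lam b c ∈ C) ∧ (∀ c ∈ C, lam b⁻¹ c ∈ C) := by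
    intro b
    obtain ⟨m, hm, w, hw, rfl⟩ := h2 b
    have e1 : ∀ y, lam (m + w) y = lam m y := by
      intro y; rw [← mul_zc hw, lam_mul, (hw y).1]
    have e2 : ∀ y, lam (m + w)⁻¹ y = lam m⁻¹ y := by
      intro y
      conv_lhs => rw [← lam_lam_inv m y, ← e1, lam_inv_lam]
    exact ⟨fun c hc => by rw [e1]; exact (hM m hm).1 c hc,
      fun c hc => by rw [e2]; exact (hM m hm).2 c hc⟩
  let CB : Subbrace B :=
    { carrier := C
      zero_mem := C.zero_mem
      add_mem := C.add_mem
      neg_mem := C.neg_mem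
      mul_mem := fun {a b} ha hb => by
        rw [mul_eq_add_lam]; exact C.add_mem ha ((hall a).1 b hb)
      inv_mem := fun {a} ha => by
        rw [inv_eq_neg_lam]; exact C.neg_mem ((hall a).2 a ha) }
  have hC : (C : Set B) = Set.univ := hS CB (fun s hs =>
    AddSubgroup.subset_closure (Or.inl (hSY hs)))
  rw [AddGroup.fg_iff]
  refine ⟨Y ∪ Set.image2 (fun x y => z (lam x y)) Y Y, ?_, hYf.union (hYf.image2 _ hYf)⟩
  exact SetLike.coe_injective (by simpa using hC)

theorem mul_fg_of_mod_zc (X : Set B) (hX : X.Finite)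
    (h2 : ∀ b : B, ∃ a ∈ Subgroup.closure X, ∃ z ∈ zc B, b = a + z) (hz : (zc B).FG) :
    Group.FG B := by
  obtain ⟨Y, hY⟩ := hz
  rw [Group.fg_iff]
  refine ⟨X ∪ Y, ?_, hX.union Y.finite_toSet⟩
  rw [eq_top_iff]
  intro b hbt
  clear hbt
  obtain ⟨a, ha, z, hz, rfl⟩ := h2 b
  rw [← mul_zc hz]
  refine Subgroup.mul_mem _ (Subgroup.closure_mono Set.subset_union_left ha) ?_
  have hYz : AddSubgroup.closure (Y : Set B) ≤ zc B := hY.le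
  rw [← hY] at hz
  induction hz using AddSubgroup.closure_induction with
  | mem y hy => exact Subgroup.subset_closure (Or.inr hy)
  | zero => rw [← one_eq_zero]; exact Subgroup.one_mem _
  | add u v hu hv h3 h4 => rw [← zc_mul (hYz hu)]; exact Subgroup.mul_mem _ h3 h4
  | neg u hu h3 => rw [← zc_inv (hYz hu)]; exact Subgroup.inv_mem _ h3

end Basic

section Quot

variable (B : Type*) [SkewBrace B]

/-- The quotient by the centre. -/
def BQ : Type _ := B ⧸ zc B

variable {B}

/-- The projection. -/
def BQ.mk (b : B) : BQ B := (QuotientAddGroup.mk b : B ⧸ zc B)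

theorem BQ.mk_surj : Function.Surjective (BQ.mk : B → BQ B) := QuotientAddGroup.mk_surjective

theorem BQ.mk_eq {a b : B} : BQ.mk a = BQ.mk b ↔ ∃ z ∈ zc B, b = a + z := by
  refine (QuotientAddGroup.eq (s := zc B)).trans ?_
  constructor
  · intro h; exact ⟨_, h, by simp⟩
  · rintro ⟨z, hz, rfl⟩; simpa using hz

/-- Lift of a binary operation. -/
noncomputable def BQ.op (f : B → B → B) (x y : BQ B) : BQ B :=
  BQ.mk (f (Function.surjInv BQ.mk_surj x) (Function.surjInv BQ.mk_surj y))

theorem BQ.surjInv_mk (a : B) : ∃ z ∈ zc B, Function.surjInv BQ.mk_surj (BQ.mk a) = a + z :=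
  BQ.mk_eq.1 (Function.surjInv_eq BQ.mk_surj (BQ.mk a)).symm

noncomputable instance : AddGroup (BQ B) :=
  letI := zc_normal (B := B)
  inferInstanceAs (AddGroup (B ⧸ zc B))

noncomputable instance : Mul (BQ B) := ⟨BQ.op (· * ·)⟩

noncomputable instance : Inv (BQ B) := ⟨fun x => BQ.mk (Function.surjInv BQ.mk_surj x)⁻¹⟩

theorem BQ.mk_add (a b : B) : BQ.mk (a + b) = BQ.mk a + BQ.mk b := rfl
theorem BQ.mk_neg (a : B) : BQ.mk (-a) = -BQ.mk a := rfl
theorem BQ.mk_zero : BQ.mk (0 : B) = 0 := rfl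

theorem BQ.mk_mul (a b : B) : BQ.mk (a * b) = BQ.mk a * BQ.mk b := by
  obtain ⟨z, hz, h1⟩ := BQ.surjInv_mk a
  obtain ⟨w, hw, h2⟩ := BQ.surjInv_mk b
  change _ = BQ.mk (Function.surjInv BQ.mk_surj (BQ.mk a) * Function.surjInv BQ.mk_surj (BQ.mk b))
  rw [BQ.mk_eq, h1, h2]
  refine ⟨z + w, add_mem hz hw, ?_⟩
  rw [← mul_zc hz, ← mul_zc hw, ← mul_zc (add_mem hz hw), ← mul_zc hw z, mul_assoc a z,
    ← mul_assoc z b, (hz b).2.2]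
  simp only [mul_assoc]

theorem BQ.mk_inv (a : B) : BQ.mk a⁻¹ = (BQ.mk a)⁻¹ := by
  obtain ⟨z, hz, h1⟩ := BQ.surjInv_mk a
  change _ = BQ.mk (Function.surjInv BQ.mk_surj (BQ.mk a))⁻¹
  rw [BQ.mk_eq, h1]
  refine ⟨-z, neg_mem hz, ?_⟩
  rw [← mul_zc hz, ← mul_zc (neg_mem hz), mul_inv_rev, ← zc_inv hz]
  have : Commute z a⁻¹ := (hz a⁻¹).2.2
  exact this.inv_left

noncomputable instance : SkewBrace (BQ B) where
  toAddGroup := inferInstance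
  mul := (· * ·)
  inv := (·⁻¹)
  one := 0
  one_eq_zero := rfl
  mul_assoc := by
    intro a b c
    obtain ⟨a, rfl⟩ := BQ.mk_surj a
    obtain ⟨b, rfl⟩ := BQ.mk_surj b
    obtain ⟨c, rfl⟩ := BQ.mk_surj c
    simp only [← BQ.mk_mul, mul_assoc]
  one_mul := by
    intro a
    obtain ⟨a, rfl⟩ := BQ.mk_surj a
    change BQ.mk 0 * BQ.mk a = _
    rw [← BQ.mk_mul, ← one_eq_zero, one_mul]
  mul_one := by
    intro a
    obtain ⟨a, rfl⟩ := BQ.mk_surj a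
    change BQ.mk a * BQ.mk 0 = _
    rw [← BQ.mk_mul, ← one_eq_zero, mul_one]
  inv_mul_cancel := by
    intro a
    obtain ⟨a, rfl⟩ := BQ.mk_surj a
    change _ = BQ.mk 0
    rw [← BQ.mk_inv, ← BQ.mk_mul, inv_mul_cancel, one_eq_zero]
  skew_distrib := by
    intro a b c
    obtain ⟨a, rfl⟩ := BQ.mk_surj a
    obtain ⟨b, rfl⟩ := BQ.mk_surj b
    obtain ⟨c, rfl⟩ := BQ.mk_surj c
    simp only [← BQ.mk_mul, ← BQ.mk_add, ← BQ.mk_neg, skew_distrib]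

/-- additive projection -/
noncomputable def BQ.addHom : B →+ BQ B where
  toFun := BQ.mk
  map_zero' := rfl
  map_add' := BQ.mk_add

/-- multiplicative projection -/
noncomputable def BQ.mulHom : B →* BQ B where
  toFun := BQ.mk
  map_one' := by rw [one_eq_zero, one_eq_zero]; rfl
  map_mul' := BQ.mk_mul

theorem BQ.mk_inv' (a : B) : BQ.mk a⁻¹ = (BQ.mk a)⁻¹ := map_inv BQ.mulHom a
theorem BQ.mk_zsmul (n : ℤ) (a : B) : BQ.mk (n • a) = n • BQ.mk a := map_zsmul BQ.addHom n a
theorem BQ.mk_nsmul (n : ℕ) (a : B) : BQ.mk (n • a) = n • BQ.mk a := map_nsmul BQ.addHom n a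

theorem BQ.mk_lam (a b : B) : BQ.mk (lam a b) = lam (BQ.mk a) (BQ.mk b) := by
  rw [lam, lam, BQ.mk_add, BQ.mk_neg, BQ.mk_mul]

/-- Preimage of a subbrace. -/
def Subbrace.comapBQ (C : Subbrace (BQ B)) : Subbrace B where
  carrier := BQ.mk ⁻¹' C.carrier
  zero_mem := C.zero_mem
  add_mem := fun {a b} ha hb => by
    rw [Set.mem_preimage, BQ.mk_add]; exact C.add_mem ha hb
  neg_mem := fun {a} ha => by rw [Set.mem_preimage, BQ.mk_neg]; exact C.neg_mem ha
  mul_mem := fun {a b} ha hb => by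
    rw [Set.mem_preimage, BQ.mk_mul]; exact C.mul_mem ha hb
  inv_mem := fun {a} ha => by rw [Set.mem_preimage, BQ.mk_inv']; exact C.inv_mem ha

/-- Preimage of an ideal. -/
def BraceIdeal.comapBQ (C : BraceIdeal (BQ B)) : BraceIdeal B where
  toSubbrace := C.toSubbrace.comapBQ
  addConj_mem := fun b {a} ha => by
    change BQ.mk _ ∈ C.carrier
    rw [BQ.mk_add, BQ.mk_add, BQ.mk_neg]; exact C.addConj_mem _ ha
  mulConj_mem := fun b {a} ha => by
    change BQ.mk _ ∈ C.carrier
    rw [BQ.mk_mul, BQ.mk_mul, BQ.mk_inv']; exact C.mulConj_mem _ ha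
  lam_mem := fun b {a} ha => by
    change BQ.mk _ ∈ C.carrier
    rw [BQ.mk_lam]; exact C.lam_mem _ ha

theorem BraceIdeal.mem_comapBQ (C : BraceIdeal (BQ B)) (b : B) :
    b ∈ C.comapBQ.carrier ↔ BQ.mk b ∈ C.carrier := Iff.rfl

theorem step_comapBQ {I J : BraceIdeal (BQ B)} (h : Step I J) : Step I.comapBQ J.comapBQ := by
  obtain ⟨h1, h2⟩ := h
  refine ⟨fun x hx => h1 hx, ?_⟩
  rcases h2 with ⟨⟨x, hx, hy, hn⟩, hs⟩ | ⟨p, hp, x, hx, hxI, hpx, hy⟩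
  · left
    obtain ⟨x, rfl⟩ := BQ.mk_surj x
    refine ⟨⟨x, hx, fun y hyJ => ?_, fun n h => ?_⟩, fun y hy => ?_⟩
    · obtain ⟨n, h⟩ := hy _ hyJ
      refine ⟨n, ?_⟩
      rw [BraceIdeal.mem_comapBQ, BQ.mk_add, BQ.mk_neg, BQ.mk_zsmul]; exact h
    · rw [BraceIdeal.mem_comapBQ, BQ.mk_zsmul] at h; exact hn n h
    · obtain ⟨-, h3, h4⟩ := hs _ hy
      refine ⟨trivial, fun u _ => ?_, fun u _ => ?_⟩
      · have := h3 (BQ.mk u) trivial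
        rwa [← BQ.mk_lam, ← BQ.mk_neg, ← BQ.mk_add] at this
      · have := h4 (BQ.mk u) trivial
        rwa [← BQ.mk_add, ← BQ.mk_add, ← BQ.mk_neg, ← BQ.mk_add] at this
  · right
    obtain ⟨x, rfl⟩ := BQ.mk_surj x
    refine ⟨p, hp, x, hx, hxI, ?_, fun y hyJ => ?_⟩
    · rw [BraceIdeal.mem_comapBQ, BQ.mk_nsmul]; exact hpx
    · obtain ⟨n, h⟩ := hy _ hyJ
      refine ⟨n, ?_⟩
      rw [BraceIdeal.mem_comapBQ, BQ.mk_add, BQ.mk_neg, BQ.mk_zsmul]; exact h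

theorem mk_mem_zetaChain (i : ℕ) : ∀ x : B, x ∈ zetaChain B (i+1) →
    BQ.mk x ∈ zetaChain (BQ B) i := by
  induction i with
  | zero =>
    intro x hx
    have hx : x ∈ zc B := (memZetaQuot_zero_iff x).1 hx
    change BQ.mk x = BQ.mk 0
    exact (BQ.mk_eq.2 ⟨x, hx, by simp⟩).symm
  | succ i ih =>
    rintro x ⟨⟨-, h1, h2⟩, h3⟩
    refine ⟨⟨trivial, fun y _ => ?_, fun y _ => ?_⟩, fun y _ => ?_⟩
    · obtain ⟨y, rfl⟩ := BQ.mk_surj y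
      have := ih _ (h1 y trivial)
      rwa [BQ.mk_add, BQ.mk_neg, BQ.mk_lam] at this
    · obtain ⟨y, rfl⟩ := BQ.mk_surj y
      have := ih _ (h2 y trivial)
      rwa [BQ.mk_add, BQ.mk_neg, BQ.mk_add, BQ.mk_add] at this
    · obtain ⟨y, rfl⟩ := BQ.mk_surj y
      have := ih _ (h3 y trivial)
      rwa [BQ.mk_mul, BQ.mk_inv', BQ.mk_mul, BQ.mk_mul] at this

theorem BQ.fg (h : IsFinitelyGenerated B) : IsFinitelyGenerated (BQ B) := by
  classical
  obtain ⟨S, hS⟩ := h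
  refine ⟨S.image BQ.mk, fun C hC => ?_⟩
  have := hS C.comapBQ (fun s hs => hC (by simpa using ⟨s, hs, rfl⟩))
  rw [Set.eq_univ_iff_forall] at this ⊢
  intro x
  obtain ⟨x, rfl⟩ := BQ.mk_surj x
  exact this x

theorem lift_gens (hA : AddGroup.FG (BQ B)) (hM : Group.FG (BQ B)) :
    ∃ X : Set B, X.Finite ∧
      (∀ b : B, ∃ a ∈ AddSubgroup.closure X, ∃ z ∈ zc B, b = a + z) ∧
      (∀ b : B, ∃ a ∈ Subgroup.closure X, ∃ z ∈ zc B, b = a + z) := by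
  obtain ⟨S, hS, hSf⟩ := AddGroup.fg_iff.1 hA
  obtain ⟨T, hT, hTf⟩ := Group.fg_iff.1 hM
  let g := Function.surjInv (BQ.mk_surj (B := B))
  have hg : ∀ x, BQ.mk (g x) = x := Function.surjInv_eq _
  have him : BQ.mk '' (g '' (S ∪ T)) = S ∪ T := by
    rw [Set.image_image]; simp [hg]
  refine ⟨g '' (S ∪ T), (hSf.union hTf).image g, fun b => ?_, fun b => ?_⟩
  · have h : BQ.mk b ∈ AddSubgroup.closure (S ∪ T) :=
      AddSubgroup.closure_mono Set.subset_union_left (hS ▸ AddSubgroup.mem_top _)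
    rw [← him] at h
    have e := AddMonoidHom.map_closure (BQ.addHom (B := B)) (g '' (S ∪ T))
    change _ = AddSubgroup.closure (BQ.mk '' _) at e
    rw [← e] at h
    obtain ⟨a, ha, h⟩ := h
    exact ⟨a, ha, BQ.mk_eq.1 h⟩
  · have h : BQ.mk b ∈ Subgroup.closure (S ∪ T) :=
      Subgroup.closure_mono Set.subset_union_right (hT ▸ Subgroup.mem_top _)
    rw [← him] at h
    have e := MonoidHom.map_closure (BQ.mulHom (B := B)) (g '' (S ∪ T))
    change _ = Subgroup.closure (BQ.mk '' _) at e
    rw [← e] at h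
    obtain ⟨a, ha, h⟩ := h
    exact ⟨a, ha, BQ.mk_eq.1 h⟩

theorem nilp (h : Group.IsNilpotent (Multiplicative (BQ B))) :
    Group.IsNilpotent (Multiplicative B) := by
  refine Subgroup.isNilpotent_of_ker_le_center (AddMonoidHom.toMultiplicative (BQ.addHom (B := B))) ?_
  intro x hx
  have hx' : BQ.mk x.toAdd = BQ.mk 0 := by
    rw [MonoidHom.mem_ker] at hx
    exact hx
  obtain ⟨z, hz, e⟩ := BQ.mk_eq.1 hx'.symm
  rw [zero_add] at e
  rw [Subgroup.mem_center_iff]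
  intro y
  have := (hz y.toAdd).2.1
  rw [← e] at this
  exact congrArg Multiplicative.ofAdd this.symm

end Quot

/-- The whole brace as an ideal. -/
def topIdeal (B : Type*) [SkewBrace B] : BraceIdeal B where
  carrier := Set.univ
  zero_mem := trivial
  add_mem := fun _ _ => trivial
  neg_mem := fun _ => trivial
  mul_mem := fun _ _ => trivial
  inv_mem := fun _ => trivial
  addConj_mem := fun _ _ _ => trivial
  mulConj_mem := fun _ _ _ => trivial
  lam_mem := fun _ _ _ => trivial

universe u

theorem main_aux (m : ℕ) : ∀ (B : Type u) [SkewBrace B], IsFinitelyGenerated B →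
    zetaChain B m = Set.univ →
    AddGroup.FG B ∧ Group.FG B ∧ Group.IsNilpotent (Multiplicative B) ∧
      Relation.ReflTransGen Step (zIdeal (⊥ : AddSubgroup B) bot_le) (topIdeal B) := by
  induction m with
  | zero =>
    intro B _ _ h
    have h0 : ∀ x : B, x = 0 := fun x => by
      have : x ∈ zetaChain B 0 := h ▸ Set.mem_univ x
      exact this
    have hs : Subsingleton B := ⟨fun a b => by rw [h0 a, h0 b]⟩
    have hs' : Subsingleton (Multiplicative B) := hs
    refine ⟨inferInstance, inferInstance, inferInstance, ?_⟩
    have : zIdeal (⊥ : AddSubgroup B) bot_le = topIdeal B := by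
      apply BraceIdeal.ext'
      refine Set.eq_univ_of_forall fun x => ?_
      exact h0 x
    rw [this]
  | succ m ih =>
    intro B _ hfg h
    have hQ : zetaChain (BQ B) m = Set.univ := by
      refine Set.eq_univ_of_forall fun x => ?_
      obtain ⟨x, rfl⟩ := BQ.mk_surj x
      exact mk_mem_zetaChain m x (h ▸ Set.mem_univ x)
    obtain ⟨h1, h2, h3, h4⟩ := ih (BQ B) (BQ.fg hfg) hQ
    obtain ⟨X, hX, g1, g2⟩ := lift_gens h1 h2
    have hn := nilp h3
    have hadd : AddGroup.FG B := add_fg_of_mod_zc hfg X hX g1 g2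
    have hz : (zc B).FG := SSAux.add_fg_of_nilpotent _
    refine ⟨hadd, mul_fg_of_mod_zc X hX g2 hz, hn, ?_⟩
    obtain ⟨Y, hY⟩ := hz
    have c1 := chain_zc (Y : Set B) Y.finite_toSet hY.le
    have c2 := Relation.ReflTransGen.lift BraceIdeal.comapBQ
      (fun _ _ => step_comapBQ) _ _ h4
    have e1 : (zIdeal (⊥ : AddSubgroup (BQ B)) bot_le).comapBQ =
        zIdeal (AddSubgroup.closure (Y : Set B)) hY.le := by
      apply BraceIdeal.ext'
      ext x
      change BQ.mk x = BQ.mk 0 ↔ x ∈ AddSubgroup.closure (Y : Set B)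
      rw [hY, eq_comm, BQ.mk_eq]
      simp
    have e2 : (topIdeal (BQ B)).comapBQ = topIdeal B := BraceIdeal.ext' rfl
    rw [Function.onFun, e1, e2] at c2
    exact c1.trans c2

/-- Every finitely generated centrally nilpotent brace is supersoluble. -/
theorem isSupersoluble_of_fg_centrallyNilpotent (B : Type*) [SkewBrace B]
    (hfg : IsFinitelyGenerated B) (hcn : IsCentrallyNilpotent B) :
    IsSupersoluble B := by
  obtain ⟨m, hm⟩ := hcn
  obtain ⟨-, -, -, h⟩ := main_aux m B hfg hm
  obtain ⟨n, f, h0, hn, hf⟩ := exists_chain h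
  refine ⟨n, f, ?_, ?_, fun i hi => (hf i hi).1, fun i hi => (hf i hi).2⟩
  · rw [h0]; rfl
  · rw [hn]; rfl

end SkewBrace
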